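/- Let d ≥ 1, p ∈ [1,∞), r ∈ ℕ_0, let s ∈ (r, r+1) (non-integer), and let m ∈ ℕ_0 with m ≤ r, and let μ₀ > 0. Then there exists a constant C > 0, depending only on d, s, p and μ₀, such that for every d-dimensional simplex T ⊆ ℝ^d with shape measure μ(T) ≤ μ₀ and every function v that is (r+1)-times continuously differentiable on a neighborhood of T, one has inf over polynomials q of total degree ≤ r of ( ∫_T ‖D^m v(x) − D^m q(x)‖^p dx )^{1/p} ≤ C · h_T^{s−m} · ( ∫_T ∫_T ‖D^r v(x) − D^r v(y)‖^p / ‖x − y‖^{d + (s−r) p} dx dy )^{1/p}, where D^k denotes the k-th total (Fréchet) derivative and ‖·‖ a fixed norm on the corresponding space of multilinear maps, and h_T is the diameter of T. -/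

import Mathlib

/-!
For a base point `z ∈ T`, let `q_z` be the Taylor polynomial of `v` of degree `r` at `z`, and put
`G = Dʳv`, `h = diam T`, `S = d + (s - r) p`. The infimum is bounded by the error of every `q_z`,
and averaging over `z ∈ T` produces the double integral.

* All derivatives of `v - q_z` of order `≤ r` vanish at `z`, and `Dʳ(v - q_z) = G - G z`.
  Integrating along segments from `z`, for `m < r`,
  `‖Dᵐ(v - q_z)(y)‖ ≤ h ^ (r - m) * ∫₀¹ ‖G (z + t (y - z)) - G z‖ dt`
  (`norm_iteratedFDeriv_le_pow`).
* For fixed `t ∈ (0, 1]` the homothety `u = z + t (y - z)` maps `T` into itself with Jacobian `t ^ d`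
  and `‖u - z‖ ≤ t h`, so that `t ^ (-d) ≤ t ^ (-S) ≤ (h / ‖u - z‖) ^ S`. Hence
  `∫_T ‖G (z + t (y - z)) - G z‖ ^ p dy ≤ h ^ S * ∫_T ‖G u - G z‖ ^ p / ‖u - z‖ ^ S du`
  (`integral_homothety_le`), uniformly in `t`. Jensen and Fubini turn this into a bound for
  `∫_T ‖Dᵐ(v - q_z)‖ ^ p` (`exists_taylor_integral_le`).
* Integrating over `z ∈ T` and using `vol T ≥ h ^ d / μ₀` gives the estimate with `C = μ₀ ^ (1 / p)`.

Because Bochner integrals of non-integrable functions are zero, the singular kernel must be shown to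
be integrable; this follows from the Lipschitz continuity of `G` on `T` and `S - p < d`
(`kernel_integrable`). The function `v` is first replaced by a global `C^{r+1}` function with the
same germ along `T`. That the Taylor polynomial has the right derivatives at `z` relies on the
symmetry of the iterated derivative (`iteratedFDeriv_perm`), which is reduced to adjacent
transpositions and the symmetry of second derivatives.
-/

open MeasureTheory

/-! ### Symmetry of iterated derivatives -/

universe u

/-- Invariance of the iterated derivative of a `C^{n+1}` function under adjacent transpositions, by
induction on the order: a transposition not involving the last slot acts on the `n`-th derivative
of `fderiv ℝ f`, and the swap of the last two slots is the symmetry of the second derivative.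
`E` and `F` share a universe so that the induction can pass from `F` to `E →L[ℝ] F`. -/
theorem iteratedFDeriv_swap {E : Type u} [NormedAddCommGroup E] [NormedSpace ℝ E] (n : ℕ) :
    ∀ {F : Type u} [NormedAddCommGroup F] [NormedSpace ℝ F] {f : E → F},
      ContDiff ℝ (n + 1 : ℕ) f → ∀ (x : E) (w : Fin (n + 1) → E) (i : Fin n),
      iteratedFDeriv ℝ (n + 1) f x (w ∘ Equiv.swap i.castSucc i.succ) =
        iteratedFDeriv ℝ (n + 1) f x w := by
  induction n with
  | zero => intro F _ _ f _ x w i; exact i.elim0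
  | succ n ih =>
    intro F _ _ f hf x w i
    have hf' : ContDiff ℝ (n + 1 : ℕ) (fderiv ℝ f) :=
      hf.fderiv_right (by norm_cast)
    refine Fin.lastCases ?_ (fun j => ?_) i
    · have hsymm : fderiv ℝ (fderiv ℝ f) =
          (ContinuousLinearMap.flipₗᵢ ℝ E E F) ∘ fderiv ℝ (fderiv ℝ f) := by
        funext y
        ext a b
        have h2 : ContDiffAt ℝ 2 f y := (hf.of_le (by norm_cast; omega)).contDiffAt
        exact (h2.isSymmSndFDerivAt (by simp)).eq a b
      have key : ∀ u : Fin (n + 2) → E, iteratedFDeriv ℝ (n + 2) f x u =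
          iteratedFDeriv ℝ n (fderiv ℝ (fderiv ℝ f)) x (Fin.init (Fin.init u))
            (u (Fin.last n).castSucc) (u (Fin.last (n + 1))) := by
        intro u
        rw [iteratedFDeriv_succ_apply_right, iteratedFDeriv_succ_apply_right]
        rfl
      rw [key, key]
      have e1 : (Fin.init (Fin.init (w ∘ Equiv.swap (Fin.last n).castSucc (Fin.last n).succ)) :
          Fin n → E) = Fin.init (Fin.init w) := by
        funext k
        simp only [Fin.init, Function.comp]
        rw [Equiv.swap_apply_of_ne_of_ne]
        · simp [Fin.ext_iff]; omega
        · simp [Fin.ext_iff]; omega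
      have e2 : Equiv.swap (Fin.last n).castSucc (Fin.last n).succ (Fin.last n).castSucc
        = Fin.last (n + 1) := by simp
      have e3 : Equiv.swap (Fin.last n).castSucc (Fin.last n).succ (Fin.last (n + 1))
        = (Fin.last n).castSucc := by
        rw [← Fin.succ_last]; simp
      rw [e1]
      simp only [Function.comp, e2, e3]
      let e : (E →L[ℝ] E →L[ℝ] F) ≃L[ℝ] (E →L[ℝ] E →L[ℝ] F) :=
        (ContinuousLinearMap.flipₗᵢ ℝ E E F).toContinuousLinearEquiv
      have hi := ContinuousLinearEquiv.iteratedFDeriv_comp_left (𝕜 := ℝ) (E := E)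
        (F := E →L[ℝ] E →L[ℝ] F) (G := E →L[ℝ] E →L[ℝ] F)
        (f := fderiv ℝ (fderiv ℝ f)) (x := x) (i := n) e
      conv_lhs => rw [hsymm]
      exact congrArg (fun A => A (Fin.init (Fin.init w)) (w (Fin.last (n + 1)))
        (w (Fin.last n).castSucc)) hi
    · rw [iteratedFDeriv_succ_apply_right, iteratedFDeriv_succ_apply_right w, ← ih hf' x _ j]
      congr 2
      · funext k
        simp only [Fin.init, Function.comp]
        congr 1
        simp only [Equiv.swap_apply_def]
        split_ifs <;> simp_all [Fin.ext_iff]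
      · simp only [Function.comp]
        rw [Equiv.swap_apply_of_ne_of_ne]
        · simp [Fin.ext_iff]; omega
        · simp [Fin.ext_iff]; omega

/-- The `n`-th derivative of a `C^n` function is a symmetric multilinear map. -/
theorem iteratedFDeriv_perm {E F : Type u} [NormedAddCommGroup E] [NormedSpace ℝ E]
    [NormedAddCommGroup F] [NormedSpace ℝ F] {n : ℕ} {f : E → F} (hf : ContDiff ℝ n f) (x : E)
    (w : Fin n → E) (σ : Equiv.Perm (Fin n)) :
    iteratedFDeriv ℝ n f x (w ∘ σ) = iteratedFDeriv ℝ n f x w := by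
  cases n with
  | zero => congr 1; exact Subsingleton.elim _ _
  | succ n =>
    have hσ : σ ∈ Submonoid.closure
        (Set.range fun i : Fin n ↦ Equiv.swap i.castSucc i.succ) := by
      rw [Equiv.Perm.mclosure_swap_castSucc_succ]; trivial
    induction hσ using Submonoid.closure_induction generalizing w with
    | mem σ h => obtain ⟨i, rfl⟩ := h; exact iteratedFDeriv_swap n hf x w i
    | one => rfl
    | mul a b _ _ ha hb =>
      rw [Equiv.Perm.coe_mul, ← Function.comp_assoc, hb, ha]

/-! ### Taylor polynomials -/

/-- The diagonal `w ↦ A (w - z, …, w - z)` of a `k`-linear form is a polynomial of degree at most `k`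
in the coordinates of `w`. -/
theorem exists_mvPolynomial_diag {d k : ℕ}
    (A : ContinuousMultilinearMap ℝ (fun _ : Fin k => EuclideanSpace ℝ (Fin d)) ℝ)
    (z : EuclideanSpace ℝ (Fin d)) :
    ∃ q : MvPolynomial (Fin d) ℝ, q.totalDegree ≤ k ∧
      ∀ w : EuclideanSpace ℝ (Fin d),
        MvPolynomial.eval (fun i => w i) q = A (fun _ => w - z) := by
  classical
  refine ⟨∑ ι : Fin k → Fin d, MvPolynomial.C (A fun i => EuclideanSpace.basisFun (Fin d) ℝ (ι i)) *
    ∏ i, (MvPolynomial.X (ι i) - MvPolynomial.C (z (ι i))), ?_, ?_⟩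
  · refine MvPolynomial.totalDegree_finsetSum_le (fun ι _ => ?_)
    refine (MvPolynomial.totalDegree_mul _ _).trans ?_
    rw [MvPolynomial.totalDegree_C, zero_add]
    refine (MvPolynomial.totalDegree_finsetProd _ _).trans ?_
    refine (Finset.sum_le_card_nsmul _ _ 1 (fun i _ => ?_)).trans (by simp)
    refine (MvPolynomial.totalDegree_sub _ _).trans ?_
    simp
  · intro w
    have hw : w - z = ∑ j, (w j - z j) • EuclideanSpace.basisFun (Fin d) ℝ j := by
      conv_lhs => rw [← (EuclideanSpace.basisFun (Fin d) ℝ).sum_repr (w - z)]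
      simp
    conv_rhs => rw [hw]
    rw [ContinuousMultilinearMap.map_sum]
    simp only [map_sum, map_mul, map_prod, map_sub, MvPolynomial.eval_C, MvPolynomial.eval_X,
      ContinuousMultilinearMap.map_smul_univ, smul_eq_mul]
    exact Finset.sum_congr rfl (fun _ _ => mul_comm _ _)

/-- The `r`-th derivative of a polynomial map of degree at most `r` is constant. -/
theorem iteratedFDeriv_const_of_finite {E : Type u} [NormedAddCommGroup E] [NormedSpace ℝ E]
    (r : ℕ) : ∀ {F : Type u} [NormedAddCommGroup F] [NormedSpace ℝ F] {f : E → F}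
    {P : FormalMultilinearSeries ℝ E F} {z : E},
    HasFiniteFPowerSeriesOnBall f P z (r + 1) ⊤ →
    ∀ y, iteratedFDeriv ℝ r f y = iteratedFDeriv ℝ r f z := by
  induction r with
  | zero =>
    intro F _ _ f P z h y
    ext w
    simpa using h.eq_const_of_bound_one y (by simp)
  | succ r ih =>
    intro F _ _ f P z h y
    rw [iteratedFDeriv_succ_eq_comp_right, iteratedFDeriv_succ_eq_comp_right]
    simp only [Function.comp]
    rw [ih h.fderiv y]

/-- The Taylor polynomial of degree `r` of `v` at `z`, characterised by its derivatives. -/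
theorem exists_taylor {d : ℕ} (r : ℕ) {v : EuclideanSpace ℝ (Fin d) → ℝ}
    (hv : ContDiff ℝ r v) (z : EuclideanSpace ℝ (Fin d)) :
    ∃ q : MvPolynomial (Fin d) ℝ, q.totalDegree ≤ r ∧
      (∀ k ≤ r, iteratedFDeriv ℝ k (fun w : EuclideanSpace ℝ (Fin d) =>
        MvPolynomial.eval (fun i => w i) q) z = iteratedFDeriv ℝ k v z) ∧
      ∀ y, iteratedFDeriv ℝ r (fun w : EuclideanSpace ℝ (Fin d) =>
        MvPolynomial.eval (fun i => w i) q) y = iteratedFDeriv ℝ r v z := by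
  let P : FormalMultilinearSeries ℝ (EuclideanSpace ℝ (Fin d)) ℝ := fun k =>
    if k ≤ r then ((k.factorial : ℝ)⁻¹) • iteratedFDeriv ℝ k v z else 0
  choose Q hQdeg hQ using fun k => exists_mvPolynomial_diag (P k) z
  set q := ∑ k ∈ Finset.range (r + 1), Q k with hq
  have hf : HasFiniteFPowerSeriesOnBall (fun w : EuclideanSpace ℝ (Fin d) =>
        MvPolynomial.eval (fun i => w i) q) P z (r + 1) ⊤ := by
    refine HasFiniteFPowerSeriesOnBall.mk' (fun m hm => ?_) (by simp) (fun y _ => ?_)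
    · simp only [P]; rw [if_neg (by omega)]
    · simp only [hq, map_sum, hQ, add_sub_cancel_left]
  have h1 : ∀ k ≤ r, iteratedFDeriv ℝ k (fun w : EuclideanSpace ℝ (Fin d) =>
        MvPolynomial.eval (fun i => w i) q) z = iteratedFDeriv ℝ k v z := by
    intro k hk
    ext w
    rw [hf.toHasFPowerSeriesOnBall.iteratedFDeriv_eq_sum_of_completeSpace]
    have : ∀ σ : Equiv.Perm (Fin k), P k (fun i => w (σ i)) =
        (k.factorial : ℝ)⁻¹ * iteratedFDeriv ℝ k v z w := by
      intro σ
      simp only [P, if_pos hk]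
      have := iteratedFDeriv_perm (hv.of_le (by exact_mod_cast hk)) z w σ
      rw [← this]; rfl
    simp only [this, Finset.sum_const, Finset.card_univ, Fintype.card_perm, Fintype.card_fin,
      nsmul_eq_mul]
    rw [mul_inv_cancel_left₀ (by positivity)]
  refine ⟨q, MvPolynomial.totalDegree_finsetSum_le (fun k hk => (hQdeg k).trans ?_), h1, ?_⟩
  · have := Finset.mem_range.1 hk; omega
  · intro y
    rw [iteratedFDeriv_const_of_finite r hf y, h1 r le_rfl]

/-! ### Taylor remainder along segments -/

/-- One step of the Taylor remainder estimate: if `Dᵏg` vanishes at `z`, then it is controlled on the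
segment from `z` to `y` by the mean of `‖Dᵏ⁺¹g‖` over that segment. -/
theorem norm_iteratedFDeriv_le_integral {E : Type*} [NormedAddCommGroup E] [NormedSpace ℝ E]
    {g : E → ℝ} {k : ℕ} (hg : ContDiff ℝ (k + 1 : ℕ) g) (z y : E)
    (hz : iteratedFDeriv ℝ k g z = 0) {τ : ℝ} (hτ : τ ∈ Set.Icc (0 : ℝ) 1) :
    ‖iteratedFDeriv ℝ k g (z + τ • (y - z))‖ ≤
      ‖y - z‖ * ∫ t in (0 : ℝ)..1, ‖iteratedFDeriv ℝ (k + 1) g (z + t • (y - z))‖ := by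
  have hc1 : ContDiff ℝ 1 (iteratedFDeriv ℝ k g) :=
    hg.iteratedFDeriv_right (by norm_cast; omega)
  have hcont : Continuous fun t : ℝ => ‖iteratedFDeriv ℝ (k + 1) g (z + t • (y - z))‖ :=
    ((hg.continuous_iteratedFDeriv le_rfl).comp (by fun_prop)).norm
  have hder : ∀ t : ℝ, HasDerivAt (fun t : ℝ => iteratedFDeriv ℝ k g (z + t • (y - z)))
      (fderiv ℝ (iteratedFDeriv ℝ k g) (z + t • (y - z)) (y - z)) t := by
    intro t
    have h1 : HasDerivAt (fun t : ℝ => z + t • (y - z)) (y - z) t := by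
      simpa using ((hasDerivAt_id t).smul_const (y - z)).const_add z
    exact ((hc1.differentiable (by norm_num)) _).hasFDerivAt.comp_hasDerivAt t h1
  have hdc : Continuous fun t : ℝ =>
      fderiv ℝ (iteratedFDeriv ℝ k g) (z + t • (y - z)) (y - z) :=
    ((hc1.continuous_fderiv (by norm_num)).comp (by fun_prop)).clm_apply continuous_const
  have hftc := intervalIntegral.integral_eq_sub_of_hasDerivAt (a := 0) (b := τ)
    (fun t _ => hder t) (hdc.intervalIntegrable _ _)
  simp only [zero_smul, add_zero, hz, sub_zero] at hftc
  rw [← hftc, ← intervalIntegral.integral_const_mul]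
  refine (intervalIntegral.norm_integral_le_integral_norm hτ.1).trans ?_
  calc ∫ t in (0:ℝ)..τ, ‖fderiv ℝ (iteratedFDeriv ℝ k g) (z + t • (y - z)) (y - z)‖
      ≤ ∫ t in (0:ℝ)..τ, ‖y - z‖ * ‖iteratedFDeriv ℝ (k + 1) g (z + t • (y - z))‖ := by
        refine intervalIntegral.integral_mono_on hτ.1 (hdc.norm.intervalIntegrable _ _)
          ((hcont.const_mul _).intervalIntegrable _ _) (fun t _ => ?_)
        rw [mul_comm, ← norm_fderiv_iteratedFDeriv]
        exact ContinuousLinearMap.le_opNorm _ _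
    _ ≤ _ := by
        refine intervalIntegral.integral_mono_interval le_rfl hτ.1 hτ.2 ?_
          ((hcont.const_mul _).intervalIntegrable _ _)
        exact Filter.Eventually.of_forall fun t => by positivity

/-- Taylor remainder estimate, with `j + 1 = r - k`. The bound holds along the whole segment, which is
what allows the downward induction on `k`. -/
theorem norm_iteratedFDeriv_le_pow {E : Type*} [NormedAddCommGroup E] [NormedSpace ℝ E]
    {g : E → ℝ} {r : ℕ} (hg : ContDiff ℝ (r : ℕ) g) (z y : E)
    (hz : ∀ k < r, iteratedFDeriv ℝ k g z = 0) (j : ℕ) :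
    ∀ k, k + j + 1 = r → ∀ τ ∈ Set.Icc (0 : ℝ) 1,
    ‖iteratedFDeriv ℝ k g (z + τ • (y - z))‖ ≤
      ‖y - z‖ ^ (j + 1) * ∫ t in (0 : ℝ)..1, ‖iteratedFDeriv ℝ r g (z + t • (y - z))‖ := by
  induction j with
  | zero =>
    rintro k rfl τ hτ
    simpa using norm_iteratedFDeriv_le_integral hg z y (hz k (by omega)) hτ
  | succ j ih =>
    rintro k hk τ hτ
    refine (norm_iteratedFDeriv_le_integral (hg.of_le (by norm_cast; omega)) z y
      (hz k (by omega)) hτ).trans ?_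
    rw [pow_succ' _ (j + 1), mul_assoc]
    refine mul_le_mul_of_nonneg_left ?_ (norm_nonneg _)
    have hcont : Continuous fun t : ℝ => ‖iteratedFDeriv ℝ (k + 1) g (z + t • (y - z))‖ :=
      ((hg.continuous_iteratedFDeriv (by norm_cast; omega)).comp (by fun_prop)).norm
    refine (intervalIntegral.integral_mono_on (by norm_num) (hcont.intervalIntegrable _ _)
      (intervalIntegrable_const (μ := volume)) (fun t ht => ih (k + 1) (by omega) t ht)).trans ?_
    simp

/-! ### The singular kernel -/

section Kernel

variable {d : ℕ} {V : Type*} [NormedAddCommGroup V] {G : EuclideanSpace ℝ (Fin d) → V}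
  {T : Set (EuclideanSpace ℝ (Fin d))} {p S : ℝ}

theorem kernel_measurable (hG : Continuous G) :
    Measurable fun x : EuclideanSpace ℝ (Fin d) × EuclideanSpace ℝ (Fin d) =>
      ‖G x.1 - G x.2‖ ^ p / ‖x.1 - x.2‖ ^ S := by
  have h1 : Continuous fun x : EuclideanSpace ℝ (Fin d) × EuclideanSpace ℝ (Fin d) =>
      ‖G x.1 - G x.2‖ := by fun_prop
  have h2 : Continuous fun x : EuclideanSpace ℝ (Fin d) × EuclideanSpace ℝ (Fin d) =>
      ‖x.1 - x.2‖ := by fun_prop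
  exact (h1.measurable.pow_const p).div (h2.measurable.pow_const S)

/-- If `G` is Lipschitz on `T`, the kernel is dominated by a multiple of `‖z - u‖ ^ (p - S)`, which is
integrable near `z` since `S - p < d`; the resulting bound is uniform in `z`. -/
theorem kernel_integrable (hd : 1 ≤ d) (hG : Continuous G) (hp : 1 ≤ p) (hS : S - p < d)
    (hT : IsCompact T) {L : ℝ}
    (hL : ∀ a ∈ T, ∀ b ∈ T, ‖G a - G b‖ ≤ L * ‖a - b‖) :
    ∃ B : ℝ, ∀ z ∈ T,
      IntegrableOn (fun u => ‖G z - G u‖ ^ p / ‖z - u‖ ^ S) T ∧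
      ∫ u in T, ‖G z - G u‖ ^ p / ‖z - u‖ ^ S ≤ B := by
  set R := Metric.diam T + 1
  set W : EuclideanSpace ℝ (Fin d) → ℝ :=
    (Metric.ball 0 R).indicator fun x => |L| ^ p * ‖x‖ ^ (p - S) with hW
  have hWint : Integrable W := by
    rw [hW, integrable_indicator_iff Metric.isOpen_ball.measurableSet]
    refine Integrable.const_mul ?_ _
    refine integrableOn_ball_of_norm_le_rpow (C := 1) (α := S - p) (by simpa using hd)
      (by simpa using hS) (Filter.Eventually.of_forall fun x => ?_) ?_
    · rw [Real.norm_of_nonneg (by positivity)]; simp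
    · exact (measurable_norm.pow_const _).aestronglyMeasurable
  refine ⟨∫ x, W x, fun z hz => ?_⟩
  have hWz : Integrable fun u => W (z - u) := hWint.comp_sub_left z
  have hbd : ∀ u ∈ T, ‖G z - G u‖ ^ p / ‖z - u‖ ^ S ≤ W (z - u) := by
    intro u hu
    have hmem : z - u ∈ Metric.ball (0 : EuclideanSpace ℝ (Fin d)) R := by
      rw [mem_ball_zero_iff, ← dist_eq_norm]
      have := Metric.dist_le_diam_of_mem hT.isBounded hz hu
      simp only [R]; linarith
    rw [hW, Set.indicator_of_mem hmem]
    rcases eq_or_ne z u with rfl | hne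
    · simp only [sub_self, norm_zero]
      rw [Real.zero_rpow (by linarith), zero_div]
      positivity
    · have hpos : 0 < ‖z - u‖ := norm_pos_iff.2 (sub_ne_zero.2 hne)
      rw [Real.rpow_sub hpos, ← mul_div_assoc, ← Real.mul_rpow (abs_nonneg _) hpos.le]
      gcongr
      exact (hL z hz u hu).trans (by gcongr; exact le_abs_self L)
  have hmeas : Measurable fun u => ‖G z - G u‖ ^ p / ‖z - u‖ ^ S :=
    (kernel_measurable hG).comp (measurable_const.prodMk measurable_id)
  have hint : IntegrableOn (fun u => ‖G z - G u‖ ^ p / ‖z - u‖ ^ S) T := by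
    refine Integrable.mono' hWz.integrableOn hmeas.aestronglyMeasurable ?_
    refine (ae_restrict_mem hT.measurableSet).mono fun u hu => ?_
    rw [Real.norm_of_nonneg (by positivity)]
    exact hbd u hu
  refine ⟨hint, ?_⟩
  calc ∫ u in T, ‖G z - G u‖ ^ p / ‖z - u‖ ^ S ≤ ∫ u in T, W (z - u) :=
        setIntegral_mono_on hint hWz.integrableOn hT.measurableSet hbd
    _ ≤ ∫ u, W (z - u) := by
        refine setIntegral_le_integral hWz (Filter.Eventually.of_forall fun u => ?_)
        exact Set.indicator_nonneg (fun x _ => by positivity) _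
    _ = ∫ x, W x := integral_sub_left_eq_self W volume z

/-- The homothety with centre `z` and ratio `t` has Jacobian `t ^ d`, and this factor is absorbed by the
singular weight because `‖z - u‖ ≤ t * diam T` on the image of `T` and `d ≤ S`. -/
theorem integral_homothety_le (hG : Continuous G) (hp : 1 ≤ p) (hS : (d : ℝ) ≤ S) (hS0 : 0 < S)
    (hT : IsCompact T) (hTc : Convex ℝ T) {z : EuclideanSpace ℝ (Fin d)} (hz : z ∈ T)
    (hint : IntegrableOn (fun u => ‖G z - G u‖ ^ p / ‖z - u‖ ^ S) T)
    {t : ℝ} (ht : 0 < t) (ht1 : t ≤ 1) :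
    ∫ y in T, ‖G z - G (z + t • (y - z))‖ ^ p ≤
      Metric.diam T ^ S * ∫ u in T, ‖G z - G u‖ ^ p / ‖z - u‖ ^ S := by
  set κ : EuclideanSpace ℝ (Fin d) → ℝ := fun u => ‖G z - G u‖ ^ p / ‖z - u‖ ^ S with hκ
  set H : EuclideanSpace ℝ (Fin d) → ℝ := fun x => T.indicator κ (z + x) with hH
  have hκ0 : ∀ u, 0 ≤ κ u := fun u => by positivity
  have hind : Integrable (T.indicator κ) := hint.integrable_indicator hT.measurableSet
  have hHint : Integrable H := hind.comp_add_left z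
  have hHt : Integrable fun y => H (t • (y - z)) :=
    (hHint.comp_smul ht.ne').comp_sub_right z
  have hH0 : ∀ x, 0 ≤ H x := fun x => Set.indicator_nonneg (fun u _ => hκ0 u) _
  have hcont : Continuous fun y => ‖G z - G (z + t • (y - z))‖ ^ p :=
    (by fun_prop : Continuous fun y => ‖G z - G (z + t • (y - z))‖).rpow_const
      (fun _ => Or.inr (by linarith))
  have h1 : ∀ y ∈ T, ‖G z - G (z + t • (y - z))‖ ^ p ≤
      Metric.diam T ^ S * t ^ d * H (t • (y - z)) := by
    intro y hy
    have hu : z + t • (y - z) ∈ T := hTc.add_smul_sub_mem hz hy ⟨ht.le, ht1⟩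
    simp only [hH]
    rw [Set.indicator_of_mem hu]
    simp only [hκ]
    rcases eq_or_ne y z with rfl | hne
    · simp [Real.zero_rpow (by linarith : p ≠ 0)]
    · have hpos : 0 < ‖y - z‖ := norm_pos_iff.2 (sub_ne_zero.2 hne)
      have hn : ‖z - (z + t • (y - z))‖ = t * ‖y - z‖ := by
        rw [sub_add_cancel_left, norm_neg, norm_smul, Real.norm_of_nonneg ht.le]
      rw [hn, mul_div_assoc', le_div_iff₀ (by positivity), mul_comm]
      gcongr
      rw [Real.mul_rpow ht.le hpos.le, mul_comm]
      gcongr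
      · rw [← dist_eq_norm]; exact Metric.dist_le_diam_of_mem hT.isBounded hy hz
      · rw [← Real.rpow_natCast]
        exact Real.rpow_le_rpow_of_exponent_ge ht ht1 hS
  calc ∫ y in T, ‖G z - G (z + t • (y - z))‖ ^ p
      ≤ ∫ y in T, Metric.diam T ^ S * t ^ d * H (t • (y - z)) :=
        setIntegral_mono_on (hcont.continuousOn.integrableOn_compact hT)
          (hHt.const_mul _).integrableOn hT.measurableSet h1
    _ ≤ ∫ y, Metric.diam T ^ S * t ^ d * H (t • (y - z)) := by
        refine setIntegral_le_integral (hHt.const_mul _) (Filter.Eventually.of_forall fun y => ?_)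
        exact mul_nonneg (by have := Metric.diam_nonneg (s := T); positivity) (hH0 _)
    _ = Metric.diam T ^ S * t ^ d * ∫ y, H (t • (y - z)) := integral_const_mul _ _
    _ = Metric.diam T ^ S * t ^ d * ∫ y, H (t • y) := by
        rw [integral_sub_right_eq_self (fun y => H (t • y)) z]
    _ = Metric.diam T ^ S * ∫ u in T, κ u := by
        rw [Measure.integral_comp_smul_of_nonneg volume H t (hR := ht.le), finrank_euclideanSpace_fin,
          smul_eq_mul, mul_assoc, mul_inv_cancel_left₀ (by positivity)]
        simp only [hH]
        rw [integral_add_left_eq_self (T.indicator κ) z, integral_indicator hT.measurableSet]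

/-- Jensen's inequality on the unit interval. -/
theorem rpow_integral_le {f : ℝ → ℝ} (hf : Continuous f) (hf0 : ∀ t, 0 ≤ f t) (hp : 1 ≤ p) :
    (∫ t in (0:ℝ)..1, f t) ^ p ≤ ∫ t in (0:ℝ)..1, f t ^ p := by
  have hfp : Continuous fun t => f t ^ p := hf.rpow_const (fun _ => Or.inr (by linarith))
  rw [intervalIntegral.integral_of_le zero_le_one, intervalIntegral.integral_of_le zero_le_one]
  have : IsProbabilityMeasure (volume.restrict (Set.Ioc (0:ℝ) 1)) := ⟨by simp⟩
  exact (convexOn_rpow hp).map_integral_le (g := fun x : ℝ => x ^ p)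
    (Real.continuous_rpow_const (by linarith)).continuousOn isClosed_Ici
    (Filter.Eventually.of_forall hf0)
    (hf.integrableOn_Ioc) (hfp.integrableOn_Ioc)

theorem integral_average_le (hG : Continuous G) (hp : 1 ≤ p) (hS : (d : ℝ) ≤ S) (hS0 : 0 < S)
    (hT : IsCompact T) (hTc : Convex ℝ T) {z : EuclideanSpace ℝ (Fin d)} (hz : z ∈ T)
    (hint : IntegrableOn (fun u => ‖G z - G u‖ ^ p / ‖z - u‖ ^ S) T) :
    ∫ y in T, (∫ t in (0:ℝ)..1, ‖G z - G (z + t • (y - z))‖) ^ p ≤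
      Metric.diam T ^ S * ∫ u in T, ‖G z - G u‖ ^ p / ‖z - u‖ ^ S := by
  have hc : Continuous fun x : EuclideanSpace ℝ (Fin d) × ℝ =>
      ‖G z - G (z + x.2 • (x.1 - z))‖ := by fun_prop
  have hcp : Continuous fun x : EuclideanSpace ℝ (Fin d) × ℝ =>
      ‖G z - G (z + x.2 • (x.1 - z))‖ ^ p := hc.rpow_const (fun _ => Or.inr (by linarith))
  have hc1 : Continuous fun y => (∫ t in (0:ℝ)..1, ‖G z - G (z + t • (y - z))‖) ^ p :=
    (intervalIntegral.continuous_parametric_intervalIntegral_of_continuous' hc 0 1).rpow_const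
      (fun _ => Or.inr (by linarith))
  have hc2 : Continuous fun y => ∫ t in (0:ℝ)..1, ‖G z - G (z + t • (y - z))‖ ^ p :=
    intervalIntegral.continuous_parametric_intervalIntegral_of_continuous' hcp 0 1
  have hc3 : Continuous fun t : ℝ => ∫ y in T, ‖G z - G (z + t • (y - z))‖ ^ p :=
    continuous_parametric_integral_of_continuous
      (f := fun (t : ℝ) y => ‖G z - G (z + t • (y - z))‖ ^ p) (hcp.comp (continuous_snd.prodMk continuous_fst)) hT
  calc ∫ y in T, (∫ t in (0:ℝ)..1, ‖G z - G (z + t • (y - z))‖) ^ p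
      ≤ ∫ y in T, ∫ t in (0:ℝ)..1, ‖G z - G (z + t • (y - z))‖ ^ p := by
        refine setIntegral_mono_on (hc1.continuousOn.integrableOn_compact hT)
          (hc2.continuousOn.integrableOn_compact hT) hT.measurableSet (fun y _ => ?_)
        exact rpow_integral_le (hc.comp (by fun_prop : Continuous fun t : ℝ => (y, t)))
          (fun _ => norm_nonneg _) hp
    _ = ∫ t in (0:ℝ)..1, ∫ y in T, ‖G z - G (z + t • (y - z))‖ ^ p := by
        simp only [intervalIntegral.integral_of_le (zero_le_one' ℝ)]
        refine integral_integral_swap ?_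
        rw [Measure.prod_restrict]
        refine IntegrableOn.mono_set ?_ (Set.prod_mono le_rfl Set.Ioc_subset_Icc_self)
        exact hcp.continuousOn.integrableOn_compact (hT.prod isCompact_Icc)
    _ ≤ ∫ t in (0:ℝ)..1, Metric.diam T ^ S * ∫ u in T, ‖G z - G u‖ ^ p / ‖z - u‖ ^ S := by
        simp only [intervalIntegral.integral_of_le (zero_le_one' ℝ)]
        exact setIntegral_mono_on hc3.integrableOn_Ioc (integrable_const _) measurableSet_Ioc
          (fun t ht => integral_homothety_le hG hp hS hS0 hT hTc hz hint ht.1 ht.2)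
    _ = _ := by simp

end Kernel

/-! ### Assembling the estimate -/

/-- A function that is `C^n` near a closed set `T` agrees near `T` with a globally `C^n` function,
obtained by multiplication with a smooth cutoff. -/
theorem exists_contDiff_eventuallyEq {d n : ℕ} {T U : Set (EuclideanSpace ℝ (Fin d))}
    (hT : IsClosed T) (hU : IsOpen U) (hTU : T ⊆ U) {v : EuclideanSpace ℝ (Fin d) → ℝ}
    (hv : ContDiffOn ℝ n v U) :
    ∃ w : EuclideanSpace ℝ (Fin d) → ℝ, ContDiff ℝ n w ∧ ∀ y ∈ T, w =ᶠ[nhds y] v := by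
  obtain ⟨f, hf0, hf1, -⟩ := exists_contMDiffMap_zero_one_nhds_of_isClosed
    (modelWithCornersSelf ℝ (EuclideanSpace ℝ (Fin d))) (n := (n : ℕ∞)) hU.isClosed_compl hT
    (Set.disjoint_left.2 fun x hx hx' => hx (hTU hx'))
  have hf : ContDiff ℝ n f := f.contMDiff.contDiff
  refine ⟨fun y => f y * v y, ?_, ?_⟩
  · rw [contDiff_iff_contDiffAt]
    intro y
    by_cases hy : y ∈ U
    · exact hf.contDiffAt.mul ((hv y hy).contDiffAt (hU.mem_nhds hy))
    · have : (fun y => f y * v y) =ᶠ[nhds y] fun _ => 0 := by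
        filter_upwards [Filter.Eventually.filter_mono (nhds_le_nhdsSet hy) hf0] with x hx
        simp [hx]
      exact contDiffAt_const.congr_of_eventuallyEq this
  · intro y hy
    filter_upwards [Filter.Eventually.filter_mono (nhds_le_nhdsSet hy) hf1] with x hx
    simp [hx]

/-- `Lᵖ` error on `T` of the Taylor polynomial at `z`, in terms of the kernel integral at `z`. -/
theorem exists_taylor_integral_le {d r m : ℕ} (hm : m ≤ r) {p S : ℝ} (hp : 1 ≤ p)
    (hS : (d : ℝ) ≤ S) (hS0 : 0 < S) {T : Set (EuclideanSpace ℝ (Fin d))}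
    (hT : IsCompact T) (hTc : Convex ℝ T) {v : EuclideanSpace ℝ (Fin d) → ℝ}
    (hv : ContDiff ℝ r v) {z : EuclideanSpace ℝ (Fin d)} (hz : z ∈ T)
    (hint : IntegrableOn (fun u => ‖iteratedFDeriv ℝ r v z - iteratedFDeriv ℝ r v u‖ ^ p /
      ‖z - u‖ ^ S) T) :
    ∃ q : MvPolynomial (Fin d) ℝ, q.totalDegree ≤ r ∧
      ∫ y in T, ‖iteratedFDeriv ℝ m v y - iteratedFDeriv ℝ m (fun w : EuclideanSpace ℝ (Fin d) =>
          MvPolynomial.eval (fun i => w i) q) y‖ ^ p ≤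
        (Metric.diam T ^ (r - m)) ^ p * (Metric.diam T ^ S *
          ∫ u in T, ‖iteratedFDeriv ℝ r v z - iteratedFDeriv ℝ r v u‖ ^ p / ‖z - u‖ ^ S) := by
  obtain ⟨q, hq, hqz, hqr⟩ := exists_taylor r hv z
  refine ⟨q, hq, ?_⟩
  set Q : EuclideanSpace ℝ (Fin d) → ℝ := fun w => MvPolynomial.eval (fun i => w i) q with hQ
  have hQc : ContDiff ℝ r Q :=
    (AnalyticOnNhd.eval_continuousLinearMap'
      (fun i => (EuclideanSpace.proj i : EuclideanSpace ℝ (Fin d) →L[ℝ] ℝ)) q).contDiff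
  have hG : Continuous (iteratedFDeriv ℝ r v) := hv.continuous_iteratedFDeriv le_rfl
  have hsub : ∀ k ≤ r, ∀ y, iteratedFDeriv ℝ k (v - Q) y =
      iteratedFDeriv ℝ k v y - iteratedFDeriv ℝ k Q y := fun k hk y =>
    iteratedFDeriv_sub_apply (hv.of_le (by exact_mod_cast hk)).contDiffAt
      (hQc.of_le (by exact_mod_cast hk)).contDiffAt
  rcases hm.eq_or_lt with rfl | hlt
  · have := integral_homothety_le hG hp hS hS0 hT hTc hz hint one_pos le_rfl
    simp only [one_smul, add_sub_cancel] at this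
    simpa [hqr, norm_sub_rev] using this
  · have hcont : Continuous fun y => ‖iteratedFDeriv ℝ m v y - iteratedFDeriv ℝ m Q y‖ ^ p := by
      refine Continuous.rpow_const ?_ (fun _ => Or.inr (by linarith))
      have h1 : Continuous (iteratedFDeriv ℝ m v) :=
        hv.continuous_iteratedFDeriv (by exact_mod_cast hm)
      have h2 : Continuous (iteratedFDeriv ℝ m Q) :=
        hQc.continuous_iteratedFDeriv (by exact_mod_cast hm)
      exact (h1.sub h2).norm
    have hc : Continuous fun x : EuclideanSpace ℝ (Fin d) × ℝ =>
      ‖iteratedFDeriv ℝ r v z - iteratedFDeriv ℝ r v (z + x.2 • (x.1 - z))‖ := by fun_prop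
    have hc1 : Continuous fun y => (∫ t in (0:ℝ)..1,
        ‖iteratedFDeriv ℝ r v z - iteratedFDeriv ℝ r v (z + t • (y - z))‖) ^ p :=
      (intervalIntegral.continuous_parametric_intervalIntegral_of_continuous' hc 0 1).rpow_const
        (fun _ => Or.inr (by linarith))
    have hD := Metric.diam_nonneg (s := T)
    have hpt : ∀ y ∈ T, ‖iteratedFDeriv ℝ m v y - iteratedFDeriv ℝ m Q y‖ ^ p ≤
        (Metric.diam T ^ (r - m)) ^ p * (∫ t in (0:ℝ)..1,
          ‖iteratedFDeriv ℝ r v z - iteratedFDeriv ℝ r v (z + t • (y - z))‖) ^ p := by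
      intro y hy
      have h0 : 0 ≤ ∫ t in (0:ℝ)..1,
          ‖iteratedFDeriv ℝ r v z - iteratedFDeriv ℝ r v (z + t • (y - z))‖ :=
        intervalIntegral.integral_nonneg zero_le_one (fun _ _ => norm_nonneg _)
      rw [← Real.mul_rpow (by positivity) h0]
      have h1 := norm_iteratedFDeriv_le_pow (hv.sub hQc) z y
        (fun k hk => by
          rw [show (fun x => v x - Q x) = v - Q from rfl, hsub k hk.le, hqz k hk.le, sub_self])
        (r - m - 1) m (by omega) 1 (by simp)
      rw [show (fun x => v x - Q x) = v - Q from rfl, one_smul, add_sub_cancel, hsub m hm,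
        show r - m - 1 + 1 = r - m by omega] at h1
      simp only [hsub r le_rfl, hqr] at h1
      refine Real.rpow_le_rpow (norm_nonneg _) (h1.trans ?_) (by linarith)
      simp only [norm_sub_rev (iteratedFDeriv ℝ r v z)] at h0 ⊢
      gcongr
      rw [← dist_eq_norm]; exact Metric.dist_le_diam_of_mem hT.isBounded hy hz
    refine (setIntegral_mono_on (hcont.continuousOn.integrableOn_compact hT)
      ((hc1.const_mul _).continuousOn.integrableOn_compact hT) hT.measurableSet hpt).trans ?_
    rw [integral_const_mul]
    gcongr
    exact integral_average_le hG hp hS hS0 hT hTc hz hint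

theorem exists_lipschitz_iteratedFDeriv {d r : ℕ} {T : Set (EuclideanSpace ℝ (Fin d))} (hT : IsCompact T)
    (hTc : Convex ℝ T) {v : EuclideanSpace ℝ (Fin d) → ℝ} (hv : ContDiff ℝ (r + 1 : ℕ) v) :
    ∃ L : ℝ, ∀ a ∈ T, ∀ b ∈ T,
      ‖iteratedFDeriv ℝ r v a - iteratedFDeriv ℝ r v b‖ ≤ L * ‖a - b‖ := by
  have hc1 : ContDiff ℝ 1 (iteratedFDeriv ℝ r v) :=
    hv.iteratedFDeriv_right (by norm_cast; omega)
  obtain ⟨L, hL⟩ := hT.exists_bound_of_continuousOn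
    (hc1.continuous_fderiv (by norm_num)).continuousOn
  exact ⟨L, fun a ha b hb => hTc.norm_image_sub_le_of_norm_fderiv_le
    (fun x _ => hc1.differentiable (by norm_num) x) hL hb ha⟩

/-- **Bramble–Hilbert / Deny–Lions polynomial approximation estimate in
fractional-order Sobolev seminorms.**
For `d ≥ 1`, `p ∈ [1,∞)`, `r ∈ ℕ₀`, non-integer `s ∈ (r, r+1)`, `m ≤ r` and
`μ₀ > 0` there is `C > 0`, depending only on `d, s, p, μ₀`, such that for every
`d`-simplex `T = conv{x₀,…,x_d} ⊆ ℝ^d` with shape measure `h_T^d / vol(T) ≤ μ₀`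
and every function `v` that is `C^{r+1}` on a neighborhood of `T`,
`inf_{deg q ≤ r} ( ∫_T ‖Dᵐv − Dᵐq‖^p )^{1/p}
  ≤ C · h_T^{s−m} · ( ∫_T ∫_T ‖Dʳv(x) − Dʳv(y)‖^p / ‖x−y‖^{d+(s−r)p} )^{1/p}`,
where `Dᵏ` denotes the `k`-th total (Fréchet) derivative. -/
theorem bramble_hilbert_fractional
    (d r m : ℕ) (hd : 1 ≤ d) (hm : m ≤ r)
    (p s μ₀ : ℝ) (hp : 1 ≤ p) (hsr : (r : ℝ) < s) (hsr1 : s < (r : ℝ) + 1)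
    (hμ₀ : 0 < μ₀) :
    ∃ C > 0,
      ∀ x : Fin (d + 1) → EuclideanSpace ℝ (Fin d),
        AffineIndependent ℝ x →
        Metric.diam (convexHull ℝ (Set.range x)) ^ d /
            (volume (convexHull ℝ (Set.range x))).toReal ≤ μ₀ →
        ∀ v : EuclideanSpace ℝ (Fin d) → ℝ,
          (∃ U : Set (EuclideanSpace ℝ (Fin d)), IsOpen U ∧
            convexHull ℝ (Set.range x) ⊆ U ∧ ContDiffOn ℝ (r + 1) v U) →
          sInf {t : ℝ | ∃ q : MvPolynomial (Fin d) ℝ, q.totalDegree ≤ r ∧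
              t = (∫ y in convexHull ℝ (Set.range x),
                    ‖iteratedFDeriv ℝ m v y -
                      iteratedFDeriv ℝ m (fun w => MvPolynomial.eval (fun i => w i) q) y‖ ^ p) ^
                  (1 / p)} ≤
            C * Metric.diam (convexHull ℝ (Set.range x)) ^ (s - (m : ℝ)) *
              (∫ y in convexHull ℝ (Set.range x), ∫ z in convexHull ℝ (Set.range x),
                  ‖iteratedFDeriv ℝ r v y - iteratedFDeriv ℝ r v z‖ ^ p /
                    ‖y - z‖ ^ ((d : ℝ) + (s - (r : ℝ)) * p)) ^ (1 / p) := by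
  refine ⟨μ₀ ^ (1 / p), by positivity, fun x hx hshape v₀ ⟨U, hU, hTU, hv₀⟩ => ?_⟩
  have hT : IsCompact (convexHull ℝ (Set.range x)) := (Set.finite_range x).isCompact_convexHull ℝ
  have hTc : Convex ℝ (convexHull ℝ (Set.range x)) := convex_convexHull ℝ _
  have hvol : 0 < (volume (convexHull ℝ (Set.range x))).toReal := by
    refine ENNReal.toReal_pos (ne_of_gt ?_) hT.measure_lt_top.ne
    refine Measure.measure_pos_of_nonempty_interior volume ?_
    rw [interior_convexHull_nonempty_iff_affineSpan_eq_top]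
    exact hx.affineSpan_eq_top_iff_card_eq_finrank_add_one.2 (by simp)
  have hx01 : 0 < Metric.diam (convexHull ℝ (Set.range x)) := by
    have hne : x 0 ≠ x ⟨1, by omega⟩ := fun h => by
      have := hx.injective h
      simp [Fin.ext_iff] at this
    exact (dist_pos.2 hne).trans_le (Metric.dist_le_diam_of_mem hT.isBounded
      (subset_convexHull ℝ _ ⟨_, rfl⟩) (subset_convexHull ℝ _ ⟨_, rfl⟩))
  generalize convexHull ℝ (Set.range x) = T at *
  obtain ⟨v, hv, hveq⟩ := exists_contDiff_eventuallyEq (n := r + 1) hT.isClosed hU hTU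
    (by exact_mod_cast hv₀)
  have hD : ∀ k, ∀ y ∈ T, iteratedFDeriv ℝ k v₀ y = iteratedFDeriv ℝ k v y := fun k y hy =>
    ((hveq y hy).iteratedFDeriv ℝ k).eq_of_nhds.symm
  set S : ℝ := (d : ℝ) + (s - (r : ℝ)) * p with hSdef
  have hσ : 0 < s - r := by linarith
  have hp0 : 0 < p := by linarith
  have hS : (d : ℝ) ≤ S := by rw [hSdef]; nlinarith
  have hd' : (1 : ℝ) ≤ d := by exact_mod_cast hd
  have hS0 : 0 < S := by linarith
  have hSp : S - p < d := by rw [hSdef]; nlinarith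
  have hG : Continuous (iteratedFDeriv ℝ r v) :=
    hv.continuous_iteratedFDeriv (by norm_cast; omega)
  set κ : EuclideanSpace ℝ (Fin d) → EuclideanSpace ℝ (Fin d) → ℝ := fun z u =>
    ‖iteratedFDeriv ℝ r v z - iteratedFDeriv ℝ r v u‖ ^ p / ‖z - u‖ ^ S with hκ
  have hI : (∫ y in T, ∫ z in T, ‖iteratedFDeriv ℝ r v₀ y - iteratedFDeriv ℝ r v₀ z‖ ^ p /
      ‖y - z‖ ^ S) = ∫ z in T, ∫ u in T, κ z u := by
    refine setIntegral_congr_fun hT.measurableSet fun y hy => ?_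
    refine setIntegral_congr_fun hT.measurableSet fun z hz => ?_
    simp only [hκ, hD r y hy, hD r z hz]
  rw [hI]
  obtain ⟨L, hL⟩ := exists_lipschitz_iteratedFDeriv hT hTc hv
  obtain ⟨B, hB⟩ := kernel_integrable hd hG hp hSp hT hL
  have hκ0 : ∀ z, 0 ≤ ∫ u in T, κ z u := fun z => integral_nonneg fun u => by
    simp only [hκ]; positivity
  -- the inner integral is measurable and bounded on `T`, hence integrable
  have houter : IntegrableOn (fun z => ∫ u in T, κ z u) T := by
    have hmeas : StronglyMeasurable fun z => ∫ u in T, κ z u :=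
      (kernel_measurable (S := S) (p := p) hG).stronglyMeasurable.integral_prod_right
    refine Measure.integrableOn_of_bounded (M := B) hT.measure_lt_top.ne
      hmeas.aestronglyMeasurable ?_
    refine (ae_restrict_mem hT.measurableSet).mono fun z hz => ?_
    rw [Real.norm_of_nonneg (hκ0 z)]
    exact (hB z hz).2
  set A := {t : ℝ | ∃ q : MvPolynomial (Fin d) ℝ, q.totalDegree ≤ r ∧
              t = (∫ y in T,
                    ‖iteratedFDeriv ℝ m v₀ y -
                      iteratedFDeriv ℝ m (fun w : EuclideanSpace ℝ (Fin d) =>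
                        MvPolynomial.eval (fun i => w i) q) y‖ ^ p) ^
                  (1 / p)} with hA
  have hA0 : ∀ t ∈ A, 0 ≤ t := by
    rintro t ⟨q, -, rfl⟩
    exact Real.rpow_nonneg (integral_nonneg fun y => by positivity) _
  have hInf0 : 0 ≤ sInf A := Real.sInf_nonneg hA0
  set h := Metric.diam T with hh
  have hpt : ∀ z ∈ T, sInf A ^ p ≤ (h ^ (r - m)) ^ p * h ^ S * ∫ u in T, κ z u := by
    intro z hz
    obtain ⟨q, hq, hle⟩ := exists_taylor_integral_le hm hp hS hS0 hT hTc
      (hv.of_le (by norm_cast; omega)) hz (hB z hz).1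
    have hmem : (∫ y in T, ‖iteratedFDeriv ℝ m v₀ y -
                      iteratedFDeriv ℝ m (fun w : EuclideanSpace ℝ (Fin d) =>
                        MvPolynomial.eval (fun i => w i) q) y‖ ^ p) ^
                  (1 / p) ∈ A := ⟨q, hq, rfl⟩
    have h1 := csInf_le ⟨0, hA0⟩ hmem
    have h2 := Real.rpow_le_rpow hInf0 h1 hp0.le
    rw [one_div, Real.rpow_inv_rpow (integral_nonneg fun y => by positivity) hp0.ne'] at h2
    rw [mul_assoc]
    refine h2.trans (le_trans (le_of_eq ?_) hle)
    refine setIntegral_congr_fun hT.measurableSet fun y hy => ?_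
    simp only [hD m y hy]
  -- average the pointwise bound over the base point `z`
  have havg : (volume T).toReal * sInf A ^ p ≤
      (h ^ (r - m)) ^ p * h ^ S * ∫ z in T, ∫ u in T, κ z u := by
    have := setIntegral_mono_on (integrableOn_const hT.measure_lt_top.ne)
      (houter.const_mul ((h ^ (r - m)) ^ p * h ^ S)) hT.measurableSet hpt
    rw [integral_const_mul, setIntegral_const, smul_eq_mul] at this
    exact this
  set I := ∫ z in T, ∫ u in T, κ z u
  have hI0 : 0 ≤ I := integral_nonneg hκ0
  have hvolh : h ^ d ≤ μ₀ * (volume T).toReal := (div_le_iff₀ hvol).1 hshape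
  have hpow : (h ^ (r - m)) ^ p * h ^ S = h ^ d * (h ^ (s - m)) ^ p := by
    rw [← Real.rpow_natCast h d, ← Real.rpow_natCast h (r - m), ← Real.rpow_mul hx01.le,
      ← Real.rpow_mul hx01.le, ← Real.rpow_add hx01, ← Real.rpow_add hx01, Nat.cast_sub hm, hSdef]
    congr 1; ring
  have hfin : sInf A ^ p ≤ μ₀ * (h ^ (s - m)) ^ p * I := by
    have hX : 0 ≤ (h ^ (s - m)) ^ p * I := by positivity
    rw [hpow] at havg
    have : (volume T).toReal * sInf A ^ p ≤
        (volume T).toReal * (μ₀ * (h ^ (s - m)) ^ p * I) := by nlinarith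
    exact le_of_mul_le_mul_left this hvol
  have := Real.rpow_le_rpow (by positivity) hfin (by positivity : 0 ≤ 1 / p)
  rw [one_div, Real.rpow_rpow_inv hInf0 hp0.ne', Real.mul_rpow (by positivity) hI0,
    Real.mul_rpow hμ₀.le (by positivity), Real.rpow_rpow_inv (by positivity) hp0.ne'] at this
  rw [one_div]
  exact this
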